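/- Let R be a commutative ring and let y_1, …, y_p, x be distinct commuting indeterminates over R. Then in R[y_1, …, y_p, x], for every integer r ≥ 0: x^r = Σ_{l=0}^{r} (−1)^l · e_l(y_1, …, y_p) · h_{r−l}(y_1, …, y_p, x), where e_l denotes the elementary symmetric polynomial of degree l and h_m the complete homogeneous symmetric polynomial of degree m in the indicated variables. -/

import Mathlib

open MvPolynomial Finset

/-- The elementary symmetric polynomial of degree `l` in the variables indexed by `S`. -/
noncomputable def esymIn {σ : Type*} [DecidableEq σ] (R : Type*) [CommRing R]
    (S : Finset σ) (l : ℕ) : MvPolynomial σ R :=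
  ∑ T ∈ S.powersetCard l, ∏ a ∈ T, X a

/-- The complete homogeneous symmetric polynomial of degree `m` in the variables indexed
by `S`: the sum of all monomials of total degree `m` in those variables. -/
noncomputable def hsymIn {σ : Type*} [DecidableEq σ] (R : Type*) [CommRing R]
    (S : Finset σ) (m : ℕ) : MvPolynomial σ R :=
  ∑ t ∈ S.sym m, (t.1.map X).prod

theorem esymIn_succ_insert {σ : Type*} [DecidableEq σ] (R : Type*) [CommRing R]
    (S : Finset σ) (a : σ) (ha : a ∉ S) (l : ℕ) :
    esymIn R (insert a S) (l + 1) = esymIn R S (l + 1) + X a * esymIn R S l := by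
  unfold esymIn
  have hnot : ∀ T ∈ S.powersetCard l, a ∉ T := fun T hT h =>
    ha ((Finset.mem_powersetCard.1 hT).1 h)
  rw [Finset.powersetCard_succ_insert ha, Finset.sum_union, Finset.sum_image, Finset.mul_sum]
  · congr 1
    refine Finset.sum_congr rfl fun T hT => ?_
    rw [Finset.prod_insert (hnot T hT)]
  · intro T hT U hU h
    have h' : insert a T = insert a U := h
    rw [← Finset.erase_insert (hnot T hT), ← Finset.erase_insert (hnot U hU), h']
  · rw [Finset.disjoint_left]
    intro T hT hT'
    obtain ⟨U, hU, rfl⟩ := Finset.mem_image.1 hT'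
    exact ha ((Finset.mem_powersetCard.1 hT).1 (Finset.mem_insert_self a U))

theorem hsymIn_succ_insert {σ : Type*} [DecidableEq σ] (R : Type*) [CommRing R]
    (S : Finset σ) (a : σ) (ha : a ∉ S) (m : ℕ) :
    hsymIn R (insert a S) (m + 1) = hsymIn R S (m + 1) + X a * hsymIn R (insert a S) m := by
  unfold hsymIn
  have key : (insert a S).sym (m + 1) =
      S.sym (m + 1) ∪ ((insert a S).sym m).image (fun t => a ::ₛ t) := by
    ext t
    simp only [Finset.mem_union, Finset.mem_image, Finset.mem_sym_iff]
    constructor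
    · intro h
      by_cases hat : a ∈ t
      · right
        obtain ⟨u, rfl⟩ : ∃ u : Sym σ m, t = a ::ₛ u := ⟨t.erase a hat, (Sym.cons_erase hat).symm⟩
        exact ⟨u, fun b hb => h b (Sym.mem_cons_of_mem hb), rfl⟩
      · left
        intro b hb
        rcases Finset.mem_insert.1 (h b hb) with rfl | h'
        · exact absurd hb hat
        · exact h'
    · rintro (h | ⟨u, hu, rfl⟩) b hb
      · exact Finset.mem_insert_of_mem (h b hb)
      · rcases Sym.mem_cons.1 hb with rfl | h'
        · exact Finset.mem_insert_self _ _
        · exact hu b h'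
  rw [key, Finset.sum_union, Finset.sum_image, Finset.mul_sum]
  · congr 1
    refine Finset.sum_congr rfl fun T hT => ?_
    simp [Sym.cons]
  · intro T hT U hU h
    exact Sym.cons_inj_right a T U |>.1 h
  · rw [Finset.disjoint_left]
    intro T hT hT'
    obtain ⟨U, hU, rfl⟩ := Finset.mem_image.1 hT'
    exact ha (Finset.mem_sym_iff.1 hT a (Sym.mem_cons_self a U))

/-- Generating function of signed elementary symmetric polynomials. -/
noncomputable def eGen {σ : Type*} [DecidableEq σ] (R : Type*) [CommRing R]
    (S : Finset σ) : PowerSeries (MvPolynomial σ R) :=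
  PowerSeries.mk fun l => (-1) ^ l * esymIn R S l

/-- Generating function of complete homogeneous symmetric polynomials. -/
noncomputable def hGen {σ : Type*} [DecidableEq σ] (R : Type*) [CommRing R]
    (S : Finset σ) : PowerSeries (MvPolynomial σ R) :=
  PowerSeries.mk fun l => hsymIn R S l

theorem eGen_insert {σ : Type*} [DecidableEq σ] (R : Type*) [CommRing R]
    (S : Finset σ) (a : σ) (ha : a ∉ S) :
    eGen R (insert a S) = eGen R S * (1 - PowerSeries.C (X a) * PowerSeries.X) := by
  have h : eGen R S * (1 - PowerSeries.C (X a) * PowerSeries.X) =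
    eGen R S - PowerSeries.C (X a) * (eGen R S * PowerSeries.X) := by ring
  rw [h]
  ext1 n
  cases n with
  | zero => simp [eGen, esymIn]
  | succ n =>
    rw [map_sub, PowerSeries.coeff_C_mul, PowerSeries.coeff_succ_mul_X]
    simp only [eGen, PowerSeries.coeff_mk, esymIn_succ_insert R S a ha]
    ring

theorem hGen_insert {σ : Type*} [DecidableEq σ] (R : Type*) [CommRing R]
    (S : Finset σ) (a : σ) (ha : a ∉ S) :
    (1 - PowerSeries.C (X a) * PowerSeries.X) * hGen R (insert a S) = hGen R S := by
  have h : (1 - PowerSeries.C (X a) * PowerSeries.X) * hGen R (insert a S) =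
    hGen R (insert a S) - PowerSeries.C (X a) * (hGen R (insert a S) * PowerSeries.X) := by ring
  rw [h]
  ext1 n
  cases n with
  | zero => simp [hGen, hsymIn]
  | succ n =>
    rw [map_sub, PowerSeries.coeff_C_mul, PowerSeries.coeff_succ_mul_X]
    simp only [hGen, PowerSeries.coeff_mk, hsymIn_succ_insert R S a ha]
    ring

theorem eGen_mul_hGen {σ : Type*} [DecidableEq σ] (R : Type*) [CommRing R]
    (S : Finset σ) (x : σ) (hx : x ∉ S) :
    eGen R S * hGen R (insert x S) = PowerSeries.mk fun r => (X x) ^ r := by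
  induction S using Finset.induction_on with
  | empty =>
    have h1 : eGen R (∅ : Finset σ) = 1 := by
      ext1 n
      cases n with
      | zero => simp [eGen, esymIn]
      | succ n =>
        rw [eGen, PowerSeries.coeff_mk, PowerSeries.coeff_one, if_neg (Nat.succ_ne_zero n), esymIn,
          Finset.powersetCard_eq_empty.2 (by simp)]
        simp
    rw [h1, one_mul]
    ext1 n
    simp [hGen, hsymIn, Finset.sym_singleton, Sym.coe_replicate]
  | insert a S ha ih =>
    have hxa : a ≠ x := fun h => hx (by simp [h])
    have hxS : x ∉ S := fun h => hx (Finset.mem_insert_of_mem h)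
    rw [eGen_insert R S a ha, mul_assoc, Finset.insert_comm,
      hGen_insert R (insert x S) a (by simp [hxa, ha]), ih hxS]

/-- For indeterminates `y_1, …, y_p, x` over a commutative ring `R` and every `r ≥ 0`:
`x^r = Σ_{l=0}^{r} (−1)^l e_l(y_1,…,y_p) h_{r−l}(y_1,…,y_p,x)`.
Here the variable `x` is `X none` and the `y`'s are `X (some i)`. -/
theorem pow_eq_alternating_esym_hsym (R : Type*) [CommRing R] (p : ℕ) (r : ℕ) :
    (X none : MvPolynomial (Option (Fin p)) R) ^ r =
      ∑ l ∈ Finset.range (r + 1),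
        (-1 : MvPolynomial (Option (Fin p)) R) ^ l *
          esymIn R ((Finset.univ : Finset (Fin p)).image Option.some) l *
          hsymIn R (Finset.univ : Finset (Option (Fin p))) (r - l) := by

  have hS : (Finset.univ : Finset (Option (Fin p))) =
      insert none ((Finset.univ : Finset (Fin p)).image Option.some) := by
    ext t
    cases t <;> simp
  have h := congrArg (PowerSeries.coeff r)
    (eGen_mul_hGen R ((Finset.univ : Finset (Fin p)).image Option.some) none (by simp))
  rw [← hS, PowerSeries.coeff_mul, PowerSeries.coeff_mk,
    Finset.Nat.sum_antidiagonal_eq_sum_range_succ_mk] at h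
  rw [← h]
  simp only [eGen, hGen, PowerSeries.coeff_mk]
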